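/- Let W be G4 or G5, and let (t₁,…,t_{m}) and (t′₁,…,t′_{m}) be tuples of reflections of W that lie in the same Hurwitz orbit. Let p and q be indices (1 ≤ p, q ≤ m) such that t_p is conjugate in W to t′_q. Then the two tuples of length m+1 obtained by replacing the entry t_p by the two consecutive equal entries (t_p², t_p²), and the entry t′_q by (t′_q², t′_q²), respectively, also lie in the same Hurwitz orbit. (Since every reflection t of W has order 3, t_p²·t_p² = t_p, so these replacements preserve the product of the tuple.) -/

import Mathlib

noncomputable section

open Matrix Complex

/-- The `i`-th Hurwitz move on length-`k` tuples of group elements. -/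
def IsHurwitzMove {G : Type*} [Group G] {k : ℕ} (t t' : Fin k → G) : Prop :=
  ∃ i : ℕ, ∃ h : i + 1 < k,
    t' ⟨i, Nat.lt_of_succ_lt h⟩ = t ⟨i + 1, h⟩ ∧
    t' ⟨i + 1, h⟩ = (t ⟨i + 1, h⟩)⁻¹ * t ⟨i, Nat.lt_of_succ_lt h⟩ * t ⟨i + 1, h⟩ ∧
    ∀ j : Fin k, (j : ℕ) ≠ i → (j : ℕ) ≠ i + 1 → t' j = t j

/-- Two tuples lie in the same Hurwitz orbit. -/
def SameHurwitzOrbit {G : Type*} [Group G] {k : ℕ} (t t' : Fin k → G) : Prop :=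
  Relation.EqvGen IsHurwitzMove t t'

/-- A group element `r` appears (as an entry) in the Hurwitz orbit of the tuple `t`. -/
def Appears {G : Type*} [Group G] {k : ℕ} (r : G) (t : Fin k → G) : Prop :=
  ∃ s : Fin k → G, SameHurwitzOrbit t s ∧ ∃ j, s j = r

/-- A tuple has two consecutive equal entries. -/
def HasConsecutiveEqualPair {G : Type*} [Group G] {k : ℕ} (t : Fin k → G) : Prop :=
  ∃ i : ℕ, ∃ h : i + 1 < k, t ⟨i, Nat.lt_of_succ_lt h⟩ = t ⟨i + 1, h⟩

/-- Replace the `p`-th entry of a tuple by two consecutive copies of its square. -/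
def doubleAt {G : Type*} [Group G] {m : ℕ} (t : Fin m → G) (p : Fin m) : Fin (m + 1) → G :=
  fun j =>
    if h1 : (j : ℕ) < (p : ℕ) then t ⟨j, h1.trans p.isLt⟩
    else if h2 : (j : ℕ) ≤ (p : ℕ) + 1 then (t p) ^ 2
    else t ⟨(j : ℕ) - 1, by have := j.isLt; omega⟩

/-- `ω = e^(2πi/3)`. -/
def ω : ℂ := Complex.exp (2 * Real.pi * Complex.I / 3)

def AMat : Matrix (Fin 2) (Fin 2) ℂ := !![1, 0; 0, ω]

def BMat : Matrix (Fin 2) (Fin 2) ℂ :=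
  !![(ω - ω ^ 2) / 3, ω ^ 2; (-2 * ω ^ 2) / 3, (-ω - 2 * ω ^ 2) / 3]

/-- The complex reflection group G₄ as the subgroup of GL(2,ℂ) generated by `AMat`, `BMat`. -/
def G4 : Subgroup (GL (Fin 2) ℂ) :=
  Subgroup.closure {g : GL (Fin 2) ℂ |
    (g : Matrix (Fin 2) (Fin 2) ℂ) = AMat ∨ (g : Matrix (Fin 2) (Fin 2) ℂ) = BMat}

/-- The matrix underlying an element of G₄. -/
def mat (t : G4) : Matrix (Fin 2) (Fin 2) ℂ := ((t : GL (Fin 2) ℂ) : Matrix (Fin 2) (Fin 2) ℂ)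

/-- A reflection in G₄: a non-identity element with eigenvalue 1. -/
def IsReflection (t : G4) : Prop := t ≠ 1 ∧ (mat t - 1).det = 0

/-- The conjugacy class R₁ of reflections of determinant ω. -/
def R1 : Set G4 := {t | IsReflection t ∧ (mat t).det = ω}

/-- The conjugacy class R₂ of reflections of determinant ω². -/
def R2 : Set G4 := {t | IsReflection t ∧ (mat t).det = ω ^ 2}

/-- A Coxeter element of G₄: an element with a primitive 6th root of unity as eigenvalue. -/
def IsCoxeter (c : G4) : Prop :=
  ∃ ζ : ℂ, IsPrimitiveRoot ζ 6 ∧ (mat c - ζ • (1 : Matrix (Fin 2) (Fin 2) ℂ)).det = 0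

/-- The relators of G₅: a³, b³, abab(baba)⁻¹. -/
def g5Rels : Set (FreeGroup (Fin 2)) :=
  {FreeGroup.of 0 ^ 3, FreeGroup.of 1 ^ 3,
    FreeGroup.of 0 * FreeGroup.of 1 * FreeGroup.of 0 * FreeGroup.of 1 *
      (FreeGroup.of 1 * FreeGroup.of 0 * FreeGroup.of 1 * FreeGroup.of 0)⁻¹}

/-- The complex reflection group G₅, by its presentation ⟨a,b | a³ = b³ = 1, abab = baba⟩. -/
abbrev G5 := PresentedGroup g5Rels

def ga : G5 := PresentedGroup.of 0
def gb : G5 := PresentedGroup.of 1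

/-- The conjugacy class of `a` in G₅. -/
def S1 : Set G5 := {t | IsConj ga t}
/-- The conjugacy class of `b` in G₅. -/
def S2 : Set G5 := {t | IsConj gb t}
/-- The conjugacy class of `a²` in G₅. -/
def S3 : Set G5 := {t | IsConj (ga ^ 2) t}
/-- The conjugacy class of `b²` in G₅. -/
def S4 : Set G5 := {t | IsConj (gb ^ 2) t}

/-- A reflection in G₅: a conjugate of a, b, a², or b². -/
def IsReflection5 (t : G5) : Prop := t ∈ S1 ∨ t ∈ S2 ∨ t ∈ S3 ∨ t ∈ S4

/-- A Coxeter element of G₅: an element of order 12. -/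
def IsCoxeter5 (c : G5) : Prop := orderOf c = 12

/-!
A doubled entry can be followed along a Hurwitz move: if `t` and `t'` are in the same orbit, every
doubling of `t` is in the orbit of the doubling of `t'` at some conjugate entry. It remains to move
a doubling between two conjugate entries `x`, `y` of one tuple. Once these are adjacent, this is
possible whenever `x ^ 3 = 1` and `x y x = y x y`, because `(x⁻¹, x⁻¹, y)` and `(x, y⁻¹, y⁻¹)` are
then in the same orbit.

Conjugate reflections do satisfy the braid relation. In `G₄` the conjugacy class of the generator
`a` is `{a, b, aba⁻¹, a⁻¹ba}`, and `a` braids with each of these elements. In `G₅` the same holds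
with `bab⁻¹` in place of `b`, since `abab = baba` and `b ^ 3 = 1` make `a` and `bab⁻¹` braid. That
every reflection of `G₄` is conjugate to `a` or `a⁻¹` follows from a normal form: up to a power of
the central element `(aba) ^ 2 = -1`, every element is conjugate to a power of `a` or to `ba²`,
which has trace `0` and determinant `1`.
-/

section Group

variable {G : Type*} [Group G] {a b x y z : G}

theorem sq_eq_inv_of_pow_three_eq_one (hx : x ^ 3 = 1) : x ^ 2 = x⁻¹ :=
  eq_inv_of_mul_eq_one_left (by rw [← pow_succ, hx])

theorem mul_self_eq_inv_of_pow_three_eq_one (hx : x ^ 3 = 1) : x * x = x⁻¹ := by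
  rw [← pow_two, sq_eq_inv_of_pow_three_eq_one hx]

theorem inv_mul_inv_of_pow_three_eq_one (hx : x ^ 3 = 1) : x⁻¹ * x⁻¹ = x := by
  rw [← _root_.mul_inv_rev, mul_self_eq_inv_of_pow_three_eq_one hx, inv_inv]

theorem conj_conj_eq_inv_conj_of_pow_three_eq_one (hx : x ^ 3 = 1) (y : G) :
    x * (x * y * x⁻¹) * x⁻¹ = x⁻¹ * y * x := by
  calc x * (x * y * x⁻¹) * x⁻¹ = (x * x) * y * (x⁻¹ * x⁻¹) := by group
    _ = x⁻¹ * y * x := by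
      rw [mul_self_eq_inv_of_pow_three_eq_one hx, inv_mul_inv_of_pow_three_eq_one hx]

theorem pow_eq_one_of_isConj {n : ℕ} (h : IsConj x y) (hx : x ^ n = 1) : y ^ n = 1 :=
  isConj_one_right.1 (hx ▸ h.pow n)

theorem isConj_inv_inv (h : IsConj x y) : IsConj x⁻¹ y⁻¹ := by
  obtain ⟨g, rfl⟩ := isConj_iff.1 h
  exact isConj_iff.2 ⟨g, by group⟩

theorem isConj_of_mul_eq_mul (h : x * y = y * z) : IsConj x z :=
  isConj_iff.2 ⟨y⁻¹, by rw [mul_assoc, inv_inv, h, inv_mul_cancel_left]⟩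

theorem induction_of_closure_eq_top {T : Set G} (hT : Subgroup.closure T = ⊤)
    (hfin : ∀ s ∈ T, IsOfFinOrder s) {P : G → Prop} (one : P 1)
    (mul_left : ∀ s ∈ T, ∀ g, P g → P (s * g)) (g : G) : P g := by
  have hg : g ∈ Submonoid.closure T := by
    rw [← Subgroup.closure_toSubmonoid_of_isOfFinOrder hfin, hT]
    trivial
  induction hg using Submonoid.closure_induction_left with
  | one => exact one
  | mul_left s hs g _ ih => exact mul_left s hs g ih

theorem mem_of_isConj_of_closure_eq_top {T S : Set G} (hT : Subgroup.closure T = ⊤)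
    (hfin : ∀ s ∈ T, IsOfFinOrder s) (hS : ∀ s ∈ T, ∀ x ∈ S, s * x * s⁻¹ ∈ S)
    (hx : x ∈ S) (hxy : IsConj x y) : y ∈ S := by
  obtain ⟨g, rfl⟩ := isConj_iff.1 hxy
  induction g using induction_of_closure_eq_top hT hfin with
  | one => simpa using hx
  | mul_left s hs g ih => simpa [mul_assoc] using hS s hs _ (ih (isConj_iff.2 ⟨g, rfl⟩))

/-- The braid relation of length three, `xyx = yxy`. -/
def BraidRel (x y : G) : Prop := x * y * x = y * x * y

namespace BraidRel

theorem refl (x : G) : BraidRel x x := rfl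

theorem symm (h : BraidRel x y) : BraidRel y x := Eq.symm h

theorem conj (h : BraidRel x y) (g : G) : BraidRel (g * x * g⁻¹) (g * y * g⁻¹) := by
  simpa only [BraidRel, map_mul, MulAut.conj_apply] using congrArg (MulAut.conj g) h

theorem inv (h : BraidRel x y) : BraidRel x⁻¹ y⁻¹ := by
  simpa [BraidRel, mul_assoc] using congrArg (·⁻¹) h

theorem conj_eq_inv_conj (h : BraidRel x y) : x * y * x⁻¹ = y⁻¹ * x * y := by
  rw [mul_inv_eq_iff_eq_mul, mul_assoc, mul_assoc, eq_inv_mul_iff_mul_eq, ← mul_assoc,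
    ← mul_assoc, h]

theorem isConj (h : BraidRel x y) : IsConj x y :=
  isConj_iff.2 ⟨x * y, by rw [mul_inv_eq_iff_eq_mul, h, mul_assoc]⟩

theorem pow_eq_one {n : ℕ} (h : BraidRel x y) (hx : x ^ n = 1) : y ^ n = 1 :=
  pow_eq_one_of_isConj h.isConj hx

end BraidRel

/-- `x` satisfies the braid relation with each of its conjugates. All reflections of `G₄` and `G₅`
have this property; it makes doubling insensitive to the choice of the doubled entry within a
conjugacy class. -/
def BraidsWithConjugates (x : G) : Prop := ∀ y, IsConj x y → BraidRel x y

namespace BraidsWithConjugates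

theorem of_isConj (hx : BraidsWithConjugates x) (hxy : IsConj x y) :
    BraidsWithConjugates y := by
  obtain ⟨g, rfl⟩ := isConj_iff.1 hxy
  intro z hz
  have hxz : IsConj x (g⁻¹ * z * g) :=
    hxy.trans (hz.trans (isConj_iff.2 ⟨g⁻¹, by rw [inv_inv]⟩))
  simpa [mul_assoc] using (hx _ hxz).conj g

theorem inv (hx : BraidsWithConjugates x) : BraidsWithConjugates x⁻¹ := fun y hy => by
  simpa using (hx y⁻¹ (by simpa using isConj_inv_inv hy)).inv

end BraidsWithConjugates

/-- For `a`, `b` of order three satisfying the braid relation, this is the conjugacy class of `a`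
in the subgroup generated by `a` and `b`. -/
def braidQuad (a b : G) : Set G := {a, b, a * b * a⁻¹, a⁻¹ * b * a}

theorem mem_braidQuad : x ∈ braidQuad a b ↔ x = a ∨ x = b ∨ x = a * b * a⁻¹ ∨ x = a⁻¹ * b * a :=
  Iff.rfl

theorem BraidRel.braidQuad_comm (h : BraidRel a b) : braidQuad a b = braidQuad b a := by
  ext x
  rw [mem_braidQuad, mem_braidQuad, h.conj_eq_inv_conj, h.symm.conj_eq_inv_conj]
  tauto

theorem BraidRel.of_mem_braidQuad (h : BraidRel a b) (hx : x ∈ braidQuad a b) :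
    BraidRel a x := by
  rcases hx with rfl | rfl | rfl | rfl
  · exact .refl _
  · exact h
  · simpa using h.conj a
  · simpa using h.conj a⁻¹

theorem conj_self_mem_braidQuad (ha : a ^ 3 = 1) (hx : x ∈ braidQuad a b) :
    a * x * a⁻¹ ∈ braidQuad a b := by
  rw [mem_braidQuad]
  rcases hx with rfl | rfl | rfl | rfl
  · exact .inl (by group)
  · exact .inr (.inr (.inl rfl))
  · exact .inr (.inr (.inr (conj_conj_eq_inv_conj_of_pow_three_eq_one ha b)))
  · exact .inr (.inl (by group))

theorem isOfFinOrder_of_mem_pair (ha : a ^ 3 = 1) (hb : b ^ 3 = 1) :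
    ∀ s ∈ ({a, b} : Set G), IsOfFinOrder s := by
  rintro s (rfl | rfl) <;> exact isOfFinOrder_iff_pow_eq_one.2 ⟨3, by norm_num, by assumption⟩

theorem BraidRel.braidsWithConjugates (h : BraidRel a b) (ha : a ^ 3 = 1)
    (hgen : Subgroup.closure {a, b} = ⊤) : BraidsWithConjugates a := fun y hy => by
  have hb : b ^ 3 = 1 := h.pow_eq_one ha
  refine h.of_mem_braidQuad (mem_of_isConj_of_closure_eq_top hgen
    (isOfFinOrder_of_mem_pair ha hb) ?_ (.inl rfl) hy)
  rintro s (rfl | rfl) x hx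
  · exact conj_self_mem_braidQuad ha hx
  · rw [h.braidQuad_comm] at hx ⊢
    exact conj_self_mem_braidQuad hb hx

theorem BraidRel.of_mul_eq_mul (hxy : x * y = y * z) (hyz : y * z = z * x) : BraidRel x y := by
  rw [BraidRel, hxy, mul_assoc, ← hyz, ← hxy, mul_assoc]

theorem isConj_mul_left_of_mem_center {c : G} (hc : c ∈ Subgroup.center G) (h : IsConj x y) :
    IsConj (c * x) (c * y) := by
  obtain ⟨g, rfl⟩ := isConj_iff.1 h
  refine isConj_iff.2 ⟨g, ?_⟩
  rw [← mul_assoc, Subgroup.mem_center_iff.1 hc g]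
  simp only [mul_assoc]

theorem mul_conj_eq_inv_conj_mul (hb : b ^ 3 = 1) (h : a * b * a * b = b * a * b * a) :
    a * (b * a * b⁻¹) = b⁻¹ * a * b * a := by
  symm
  calc b⁻¹ * a * b * a = b⁻¹ * b⁻¹ * (b * a * b * a) := by group
    _ = b * (a * b * a * b) := by rw [inv_mul_inv_of_pow_three_eq_one hb, h]
    _ = a * b * a * (b * b) := by rw [h]; simp only [← mul_assoc, ← h]
    _ = a * (b * a * b⁻¹) := by rw [mul_self_eq_inv_of_pow_three_eq_one hb]; group

theorem mul_conj_eq_conj_mul_inv_conj (hb : b ^ 3 = 1) (h : a * b * a * b = b * a * b * a) :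
    a * (b * a * b⁻¹) = b * a * b⁻¹ * (b⁻¹ * a * b) := by
  calc a * (b * a * b⁻¹) = b * (b⁻¹ * a * b * a) * b⁻¹ := by group
    _ = b * (a * (b * a * b⁻¹)) * b⁻¹ := by rw [mul_conj_eq_inv_conj_mul hb h]
    _ = b * a * b⁻¹ * (b * (b * a * b⁻¹) * b⁻¹) := by group
    _ = b * a * b⁻¹ * (b⁻¹ * a * b) := by rw [conj_conj_eq_inv_conj_of_pow_three_eq_one hb]

theorem braidRel_conj (hb : b ^ 3 = 1) (h : a * b * a * b = b * a * b * a) :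
    BraidRel a (b * a * b⁻¹) :=
  .of_mul_eq_mul (mul_conj_eq_conj_mul_inv_conj hb h)
    ((mul_conj_eq_conj_mul_inv_conj hb h).symm.trans (mul_conj_eq_inv_conj_mul hb h))

theorem commute_inv_conj_conj (ha : a ^ 3 = 1) (hb : b ^ 3 = 1)
    (h : a * b * a * b = b * a * b * a) : Commute b (a⁻¹ * (b * a * b⁻¹) * a) := by
  have hconj : b * (b * a * b⁻¹) * b⁻¹ = b⁻¹ * a * b :=
    conj_conj_eq_inv_conj_of_pow_three_eq_one hb a
  have hd : b * a * b⁻¹ * (b⁻¹ * a * b) * (b * a * b⁻¹)⁻¹ = a := by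
    rw [← mul_conj_eq_conj_mul_inv_conj hb h, mul_inv_cancel_right]
  have hbraid : BraidRel (b⁻¹ * a * b) (b * a * b⁻¹) := by
    simpa only [hconj] using ((braidRel_conj hb h).conj b).symm
  have hc : (b * a * b⁻¹) ^ 3 = 1 := by rw [conj_pow, ha]; group
  rw [← (braidRel_conj hb h).symm.conj_eq_inv_conj]
  refine mul_inv_eq_iff_eq_mul.1 ?_
  set c := b * a * b⁻¹
  set d := b⁻¹ * a * b
  calc b * (c * a * c⁻¹) * b⁻¹ = (b * c * b⁻¹) * (b * a * b⁻¹) * (b * c * b⁻¹)⁻¹ := by group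
    _ = d * c * d⁻¹ := by rw [hconj]
    _ = c⁻¹ * d * c := hbraid.conj_eq_inv_conj
    _ = c * (c * d * c⁻¹) * c⁻¹ := (conj_conj_eq_inv_conj_of_pow_three_eq_one hc d).symm
    _ = c * a * c⁻¹ := by rw [hd]

theorem conj_mem_braidQuad_conj (ha : a ^ 3 = 1) (hb : b ^ 3 = 1)
    (h : a * b * a * b = b * a * b * a) (hx : x ∈ braidQuad a (b * a * b⁻¹)) :
    b * x * b⁻¹ ∈ braidQuad a (b * a * b⁻¹) := by
  have hconj : b⁻¹ * a * b = a * (b * a * b⁻¹) * a⁻¹ := by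
    rw [mul_conj_eq_inv_conj_mul hb h, mul_inv_cancel_right]
  rw [mem_braidQuad]
  rcases hx with rfl | rfl | rfl | rfl
  · exact .inr (.inl rfl)
  · exact .inr (.inr (.inl (by rw [conj_conj_eq_inv_conj_of_pow_three_eq_one hb, hconj])))
  · exact .inl (by rw [← hconj]; group)
  · exact .inr (.inr (.inr (by rw [commute_inv_conj_conj ha hb h, mul_inv_cancel_right])))

theorem braidsWithConjugates_of_mul_mul_mul_eq (ha : a ^ 3 = 1) (hb : b ^ 3 = 1)
    (h : a * b * a * b = b * a * b * a) (hgen : Subgroup.closure {a, b} = ⊤) :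
    BraidsWithConjugates a := fun y hy => by
  refine (braidRel_conj hb h).of_mem_braidQuad (mem_of_isConj_of_closure_eq_top hgen
    (isOfFinOrder_of_mem_pair ha hb) ?_ (.inl rfl) hy)
  rintro s (rfl | rfl) x hx
  · exact conj_self_mem_braidQuad ha hx
  · exact conj_mem_braidQuad_conj ha hb h hx

/-- The square of the Garside element `aba`; it is central in the subgroup generated by `a` and
`b` when these satisfy the braid relation. In `G₄` it is the scalar matrix `-1`. -/
def fullTwist (a b : G) : G := (a * b * a) ^ 2

namespace BraidRel

theorem commute_fullTwist_left (h : BraidRel a b) : Commute a (fullTwist a b) := by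
  have ha : a * (a * b * a) = a * b * a * b := by rw [h, ← mul_assoc, ← mul_assoc, h]
  have hb : b * (a * b * a) = a * b * a * a := by rw [← mul_assoc, ← mul_assoc, ← h]
  rw [Commute, SemiconjBy, fullTwist, pow_two, ← mul_assoc, ha, mul_assoc, hb, ← mul_assoc]

theorem fullTwist_comm (h : BraidRel a b) : fullTwist a b = fullTwist b a := by
  rw [fullTwist, h, fullTwist]

theorem commute_fullTwist_right (h : BraidRel a b) : Commute b (fullTwist a b) :=
  h.fullTwist_comm ▸ h.symm.commute_fullTwist_left

theorem mul_sq_mul_eq_fullTwist_mul (h : BraidRel a b) (ha : a ^ 3 = 1) :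
    b * a ^ 2 * b = fullTwist a b * a := by
  rw [← h.commute_fullTwist_left]
  calc b * a ^ 2 * b = (a * a⁻¹) * (b * a ^ 2 * b) * (a * a⁻¹) := by group
    _ = a⁻¹ * fullTwist a b * a⁻¹ := by simp only [fullTwist, pow_two]; group
    _ = fullTwist a b * (a⁻¹ * a⁻¹) := by
      rw [h.commute_fullTwist_left.inv_left, mul_assoc]
    _ = a * fullTwist a b := by
      rw [inv_mul_inv_of_pow_three_eq_one ha, h.commute_fullTwist_left]

theorem mul_self_eq_fullTwist_mul (h : BraidRel a b) (ha : a ^ 3 = 1) :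
    b * b = fullTwist a b * (a ^ 2 * b * a ^ 2) := by
  calc b * b = b * (b * a ^ 2 * b) * b⁻¹ * (a ^ 2)⁻¹ := by group
    _ = fullTwist a b * (b * a * b⁻¹) * (a ^ 2)⁻¹ := by
      rw [h.mul_sq_mul_eq_fullTwist_mul ha, ← mul_assoc, h.commute_fullTwist_right]
      simp only [mul_assoc]
    _ = fullTwist a b * (a⁻¹ * b * a) * (a ^ 2)⁻¹ := by rw [h.symm.conj_eq_inv_conj]
    _ = fullTwist a b * (a⁻¹ * b * a⁻¹) := by group
    _ = fullTwist a b * (a ^ 2 * b * a ^ 2) := by rw [sq_eq_inv_of_pow_three_eq_one ha]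

theorem fullTwist_sq_eq_one (h : BraidRel a b) (ha : a ^ 3 = 1) :
    fullTwist a b ^ 2 = 1 := by
  have hsq : (a ^ 2 * b * a ^ 2) ^ 2 = b := by
    calc (a ^ 2 * b * a ^ 2) ^ 2 = a ^ 2 * (b * (a ^ 3 * a) * b) * a ^ 2 := by
          simp only [pow_succ, pow_zero, one_mul, mul_assoc]
      _ = a ^ 2 * (a * b * a) * a ^ 2 := by rw [ha, one_mul, h]
      _ = a ^ 3 * b * a ^ 3 := by simp only [pow_succ, pow_zero, one_mul, mul_assoc]
      _ = b := by rw [ha, one_mul, mul_one]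
  have hcomm : Commute (fullTwist a b) (a ^ 2 * b * a ^ 2) :=
    (((h.commute_fullTwist_left.pow_left 2).mul_left h.commute_fullTwist_right).mul_left
      (h.commute_fullTwist_left.pow_left 2)).symm
  have hfour : b = fullTwist a b ^ 2 * b := by
    calc b = b ^ 3 * b := by rw [h.pow_eq_one ha, one_mul]
      _ = (b * b) ^ 2 := by simp only [pow_succ, pow_zero, one_mul, mul_assoc]
      _ = fullTwist a b ^ 2 * b := by
        rw [h.mul_self_eq_fullTwist_mul ha, hcomm.mul_pow, hsq]
  exact mul_eq_right.1 hfour.symm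

theorem fullTwist_mem_center (h : BraidRel a b) (ha : a ^ 3 = 1)
    (hgen : Subgroup.closure {a, b} = ⊤) : fullTwist a b ∈ Subgroup.center G := by
  refine Subgroup.mem_center_iff.2
    (induction_of_closure_eq_top hgen
      (isOfFinOrder_of_mem_pair ha (h.pow_eq_one ha)) (by simp) ?_)
  rintro s (rfl | rfl) g hg
  · exact h.commute_fullTwist_left.mul_left hg
  · exact h.commute_fullTwist_right.mul_left hg

theorem exists_mul_pow_mul_eq (h : BraidRel a b) (ha : a ^ 3 = 1) (i : ℕ) :
    ∃ n, (∃ k, b * a ^ i * b = fullTwist a b ^ n * a ^ k) ∨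
      ∃ j k, b * a ^ i * b = fullTwist a b ^ n * (a ^ j * b * a ^ k) := by
  rw [pow_eq_pow_mod i ha]
  have hi : i % 3 < 3 := Nat.mod_lt _ (by norm_num)
  interval_cases i % 3
  · exact ⟨1, .inr ⟨2, 2, by rw [pow_zero, mul_one, pow_one, h.mul_self_eq_fullTwist_mul ha]⟩⟩
  · exact ⟨0, .inr ⟨1, 1, by rw [pow_zero, one_mul, pow_one, h]⟩⟩
  · exact ⟨1, .inl ⟨1, by rw [pow_one, pow_one, h.mul_sq_mul_eq_fullTwist_mul ha]⟩⟩

theorem exists_eq_fullTwist_pow_mul (h : BraidRel a b) (ha : a ^ 3 = 1)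
    (hgen : Subgroup.closure {a, b} = ⊤) (g : G) :
    ∃ n, (∃ k, g = fullTwist a b ^ n * a ^ k) ∨
      ∃ i j, g = fullTwist a b ^ n * (a ^ i * b * a ^ j) := by
  have hca (n : ℕ) : a * fullTwist a b ^ n = fullTwist a b ^ n * a :=
    h.commute_fullTwist_left.pow_right n
  have hcb (n : ℕ) : b * fullTwist a b ^ n = fullTwist a b ^ n * b :=
    h.commute_fullTwist_right.pow_right n
  induction g using induction_of_closure_eq_top hgen
    (isOfFinOrder_of_mem_pair ha (h.pow_eq_one ha)) with
  | one => exact ⟨0, .inl ⟨0, by simp⟩⟩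
  | mul_left s hs g ih =>
    rcases hs with hs | hs <;> rw [hs] <;> obtain ⟨n, ⟨k, rfl⟩ | ⟨i, j, rfl⟩⟩ := ih
    · exact ⟨n, .inl ⟨k + 1, by rw [← mul_assoc, hca, mul_assoc, pow_succ']⟩⟩
    · exact ⟨n, .inr ⟨i + 1, j, by rw [← mul_assoc, hca, mul_assoc, pow_succ']; group⟩⟩
    · exact ⟨n, .inr ⟨0, k, by rw [← mul_assoc, hcb, mul_assoc, pow_zero, one_mul]⟩⟩
    · have hmul : b * (fullTwist a b ^ n * (a ^ i * b * a ^ j)) =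
          fullTwist a b ^ n * (b * a ^ i * b * a ^ j) := by
        rw [← mul_assoc, hcb]
        simp only [mul_assoc]
      obtain ⟨n', ⟨k, hk⟩ | ⟨i', j', hij⟩⟩ := h.exists_mul_pow_mul_eq ha i
      · exact ⟨n + n', .inl ⟨k + j, by rw [hmul, hk]; simp only [pow_add, mul_assoc]⟩⟩
      · exact ⟨n + n', .inr ⟨i', j' + j, by rw [hmul, hij]; simp only [pow_add, mul_assoc]⟩⟩

theorem isConj_fullTwist_mul_sq (h : BraidRel a b) (ha : a ^ 3 = 1)
    (hgen : Subgroup.closure {a, b} = ⊤) : IsConj (fullTwist a b * a ^ 2) (b * a) := by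
  have hb_sq : fullTwist a b * b ^ 2 = a ^ 2 * b * a ^ 2 := by
    rw [pow_two b, h.mul_self_eq_fullTwist_mul ha, ← mul_assoc, ← pow_two,
      h.fullTwist_sq_eq_one ha, one_mul]
  have hrot : a ^ 2 * b * a ^ 2 * a ^ 2 = a ^ 2 * (b * a) := by
    rw [mul_assoc, ← pow_add, pow_succ a 3, ha, one_mul, mul_assoc]
  have hconj : IsConj (fullTwist a b * a ^ 2) (fullTwist a b * b ^ 2) :=
    isConj_mul_left_of_mem_center (h.fullTwist_mem_center ha hgen) (h.isConj.pow 2)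
  exact (hb_sq ▸ hconj).trans (isConj_of_mul_eq_mul hrot)

theorem exists_isConj_fullTwist_pow_mul (h : BraidRel a b) (ha : a ^ 3 = 1)
    (hgen : Subgroup.closure {a, b} = ⊤) (g : G) :
    ∃ n, (∃ k, IsConj (fullTwist a b ^ n * a ^ k) g) ∨
      IsConj (fullTwist a b ^ n * (b * a ^ 2)) g := by
  have mul_left {n : ℕ} {x y : G} (hxy : IsConj x y) :
      IsConj (fullTwist a b ^ n * x) (fullTwist a b ^ n * y) :=
    isConj_mul_left_of_mem_center (pow_mem (h.fullTwist_mem_center ha hgen) n) hxy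
  obtain ⟨n, ⟨k, rfl⟩ | ⟨i, j, rfl⟩⟩ := h.exists_eq_fullTwist_pow_mul ha hgen g
  · exact ⟨n, .inl ⟨k, .refl _⟩⟩
  have hrot : IsConj (b * a ^ ((j + i) % 3)) (a ^ i * b * a ^ j) :=
    isConj_iff.2 ⟨a ^ i, by rw [← pow_eq_pow_mod _ ha, pow_add]; group⟩
  have hlt : (j + i) % 3 < 3 := Nat.mod_lt _ (by norm_num)
  interval_cases (j + i) % 3
  · refine ⟨n, .inl ⟨1, mul_left (.trans ?_ hrot)⟩⟩
    simpa using h.isConj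
  · refine ⟨n + 1, .inl ⟨2, ?_⟩⟩
    rw [pow_succ, mul_assoc]
    exact mul_left ((h.isConj_fullTwist_mul_sq ha hgen).trans (by simpa using hrot))
  · exact ⟨n, .inr (mul_left hrot)⟩

end BraidRel

end Group

section Tuple

local infixr:67 " ∷ " => vecCons

variable {G : Type*} [Group G] {m : ℕ} {x y z : G} {t t' : Fin m → G}

theorem isHurwitzMove_swap (x y : G) (t : Fin m → G) :
    IsHurwitzMove (x ∷ y ∷ t) (y ∷ (y⁻¹ * x * y) ∷ t) := by
  refine ⟨0, by omega, rfl, rfl, fun j hj₀ hj₁ => ?_⟩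
  obtain ⟨_ | _ | j, hj⟩ := j
  exacts [(hj₀ rfl).elim, (hj₁ rfl).elim, rfl]

theorem IsHurwitzMove.cons (h : IsHurwitzMove t t') (a : G) : IsHurwitzMove (a ∷ t) (a ∷ t') := by
  obtain ⟨i, hi, hfst, hsnd, hrest⟩ := h
  refine ⟨i + 1, by omega, hfst, hsnd, fun j hj₀ hj₁ => ?_⟩
  obtain ⟨_ | j, hj⟩ := j
  · rfl
  · exact hrest ⟨j, by omega⟩ (by simpa using hj₀) (by simpa using hj₁)

theorem IsHurwitzMove.induction
    {motive : ∀ {m : ℕ} {t t' : Fin m → G}, IsHurwitzMove t t' → Prop}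
    (swap : ∀ {m : ℕ} (x y : G) (t : Fin m → G), motive (isHurwitzMove_swap x y t))
    (cons : ∀ {m : ℕ} {t t' : Fin m → G} (h : IsHurwitzMove t t') (a : G),
      motive h → motive (h.cons a))
    (h : IsHurwitzMove t t') : motive h := by
  have ⟨i, hi, hfst, hsnd, hrest⟩ := h
  induction i generalizing m with
  | zero =>
    obtain ⟨n, rfl⟩ : ∃ n, m = n + 2 := ⟨m - 2, by omega⟩
    obtain ⟨x, y, t, rfl⟩ : ∃ x y s, t = x ∷ y ∷ s :=
      ⟨_, _, _, by rw [cons_head_tail, cons_head_tail]⟩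
    obtain rfl : t' = y ∷ (y⁻¹ * x * y) ∷ t := by
      funext ⟨j, hj⟩
      rcases j with _ | _ | j
      exacts [hfst, hsnd, hrest ⟨j + 2, hj⟩ (by simp) (by simp)]
    exact swap x y t
  | succ i ih =>
    obtain ⟨n, rfl⟩ : ∃ n, m = n + 1 := ⟨m - 1, by omega⟩
    obtain ⟨a, t, rfl⟩ : ∃ a s, t = a ∷ s := ⟨_, _, (cons_head_tail t).symm⟩
    obtain ⟨a', t', rfl⟩ : ∃ a s, t' = a ∷ s := ⟨_, _, (cons_head_tail t').symm⟩
    obtain rfl : a' = a := hrest 0 (by simp) (by simp)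
    have htail_rest (j : Fin n) (hj₀ : (j : ℕ) ≠ i) (hj₁ : (j : ℕ) ≠ i + 1) : t' j = t j :=
      hrest j.succ (by simpa using hj₀) (by simpa using hj₁)
    have hi' : i + 1 < n := by omega
    have htail : IsHurwitzMove t t' := ⟨i, hi', hfst, hsnd, htail_rest⟩
    exact cons htail _ (ih htail hi' hfst hsnd htail_rest)

namespace SameHurwitzOrbit

theorem refl (t : Fin m → G) : SameHurwitzOrbit t t := Relation.EqvGen.refl t

theorem symm (h : SameHurwitzOrbit t t') : SameHurwitzOrbit t' t := Relation.EqvGen.symm _ _ h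

theorem trans {t'' : Fin m → G} (h : SameHurwitzOrbit t t') (h' : SameHurwitzOrbit t' t'') :
    SameHurwitzOrbit t t'' :=
  Relation.EqvGen.trans _ _ _ h h'

theorem cons (h : SameHurwitzOrbit t t') (a : G) : SameHurwitzOrbit (a ∷ t) (a ∷ t') := by
  induction h with
  | rel _ _ h => exact .rel _ _ (h.cons a)
  | refl _ => exact .refl _
  | symm _ _ _ ih => exact ih.symm
  | trans _ _ _ _ _ ih ih' => exact ih.trans ih'

instance : Trans (SameHurwitzOrbit (G := G) (k := m)) SameHurwitzOrbit SameHurwitzOrbit :=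
  ⟨trans⟩

end SameHurwitzOrbit

theorem IsHurwitzMove.sameHurwitzOrbit (h : IsHurwitzMove t t') : SameHurwitzOrbit t t' :=
  .rel _ _ h

theorem sameHurwitzOrbit_swap (h : x * y = y * z) (t : Fin m → G) :
    SameHurwitzOrbit (x ∷ y ∷ t) (y ∷ z ∷ t) := by
  obtain rfl : z = y⁻¹ * x * y := by rw [mul_assoc, h, inv_mul_cancel_left]
  exact (isHurwitzMove_swap x y t).sameHurwitzOrbit

theorem doubleAt_cons_zero (a : G) (t : Fin m → G) :
    doubleAt (a ∷ t) 0 = a ^ 2 ∷ a ^ 2 ∷ t := by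
  funext ⟨j, hj⟩
  rcases j with _ | _ | j <;> rfl

theorem doubleAt_cons_succ (a : G) (t : Fin m → G) (p : Fin m) :
    doubleAt (a ∷ t) p.succ = a ∷ doubleAt t p := by
  funext j
  induction j using Fin.cases with
  | zero => rfl
  | succ j =>
    rw [cons_val_succ]
    unfold doubleAt
    simp only [Fin.val_succ, Nat.add_lt_add_iff_right, Nat.add_le_add_iff_right, cons_val_succ]
    split_ifs with hlt hle
    · rfl
    · rfl
    · obtain ⟨_ | j, hj⟩ := j
      · exact (hle (Nat.zero_le _)).elim
      · rfl

theorem sameHurwitzOrbit_sq_sq_left (h : x * y = y * z) (t : Fin m → G) :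
    SameHurwitzOrbit (x ^ 2 ∷ x ^ 2 ∷ y ∷ t) (y ∷ z ^ 2 ∷ z ^ 2 ∷ t) := by
  have hsemi : SemiconjBy y z x := h.symm
  have hsq : x ^ 2 * y = y * z ^ 2 := (hsemi.pow_right 2).symm
  exact ((sameHurwitzOrbit_swap hsq t).cons _).trans (sameHurwitzOrbit_swap hsq _)

theorem sameHurwitzOrbit_sq_sq_right (h : x * y = y * z) (hy : y ^ 3 = 1) (t : Fin m → G) :
    SameHurwitzOrbit (x ∷ y ^ 2 ∷ y ^ 2 ∷ t) (y ^ 2 ∷ y ^ 2 ∷ z ∷ t) := by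
  have hfst : x * y ^ 2 = y ^ 2 * (y * x * y⁻¹) := by
    rw [sq_eq_inv_of_pow_three_eq_one hy]
    group
  have hsnd : y * x * y⁻¹ * y ^ 2 = y ^ 2 * z := by
    rw [pow_two, ← mul_assoc, inv_mul_cancel_right, mul_assoc, h, ← mul_assoc]
  exact (sameHurwitzOrbit_swap hfst _).trans ((sameHurwitzOrbit_swap hsnd t).cons _)

/-- Every doubling of `t` at an entry of order three lies in the Hurwitz orbit of a doubling of
`t'` at a conjugate entry. -/
def DoublingsTransfer (t t' : Fin m → G) : Prop :=
  ∀ p, t p ^ 3 = 1 →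
    ∃ q, IsConj (t p) (t' q) ∧ SameHurwitzOrbit (doubleAt t p) (doubleAt t' q)

namespace DoublingsTransfer

theorem refl (t : Fin m → G) : DoublingsTransfer t t := fun p _ => ⟨p, .refl _, .refl _⟩

theorem trans {t'' : Fin m → G} (h : DoublingsTransfer t t') (h' : DoublingsTransfer t' t'') :
    DoublingsTransfer t t'' := fun p hp => by
  obtain ⟨q, hpq, horbit⟩ := h p hp
  obtain ⟨r, hqr, horbit'⟩ := h' q (pow_eq_one_of_isConj hpq hp)
  exact ⟨r, hpq.trans hqr, horbit.trans horbit'⟩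

theorem cons (h : DoublingsTransfer t t') (horbit : SameHurwitzOrbit t t') (a : G) :
    DoublingsTransfer (a ∷ t) (a ∷ t') := fun p hp => by
  induction p using Fin.cases with
  | zero =>
    refine ⟨0, .refl _, ?_⟩
    rw [doubleAt_cons_zero, doubleAt_cons_zero]
    exact (horbit.cons _).cons _
  | succ p =>
    obtain ⟨q, hpq, hdouble⟩ := h p hp
    refine ⟨q.succ, hpq, ?_⟩
    rw [doubleAt_cons_succ, doubleAt_cons_succ]
    exact hdouble.cons a

end DoublingsTransfer

theorem doublingsTransfer_swap (h : x * y = y * z) (t : Fin m → G) :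
    DoublingsTransfer (x ∷ y ∷ t) (y ∷ z ∷ t) := fun p hp => by
  induction p using Fin.cases with
  | zero =>
    refine ⟨Fin.succ 0, isConj_of_mul_eq_mul h, ?_⟩
    simpa only [doubleAt_cons_succ, doubleAt_cons_zero] using sameHurwitzOrbit_sq_sq_left h t
  | succ p =>
  induction p using Fin.cases with
  | zero =>
    refine ⟨0, .refl _, ?_⟩
    simpa only [doubleAt_cons_succ, doubleAt_cons_zero] using sameHurwitzOrbit_sq_sq_right h hp t
  | succ p =>
    refine ⟨p.succ.succ, .refl _, ?_⟩
    simpa only [doubleAt_cons_succ] using sameHurwitzOrbit_swap h _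

theorem doublingsTransfer_swap_symm (h : x * y = y * z) (t : Fin m → G) :
    DoublingsTransfer (y ∷ z ∷ t) (x ∷ y ∷ t) := fun p hp => by
  induction p using Fin.cases with
  | zero =>
    refine ⟨Fin.succ 0, .refl _, ?_⟩
    simpa only [doubleAt_cons_succ, doubleAt_cons_zero] using
      (sameHurwitzOrbit_sq_sq_right h hp t).symm
  | succ p =>
  induction p using Fin.cases with
  | zero =>
    refine ⟨0, (isConj_of_mul_eq_mul h).symm, ?_⟩
    simpa only [doubleAt_cons_succ, doubleAt_cons_zero] using
      (sameHurwitzOrbit_sq_sq_left h t).symm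
  | succ p =>
    refine ⟨p.succ.succ, .refl _, ?_⟩
    simpa only [doubleAt_cons_succ] using (sameHurwitzOrbit_swap h _).symm

theorem IsHurwitzMove.doublingsTransfer_and_symm (h : IsHurwitzMove t t') :
    DoublingsTransfer t t' ∧ DoublingsTransfer t' t := by
  induction h using IsHurwitzMove.induction with
  | swap x y t =>
    have h : x * y = y * (y⁻¹ * x * y) := by group
    exact ⟨doublingsTransfer_swap h t, doublingsTransfer_swap_symm h t⟩
  | cons h a ih =>
    exact ⟨ih.1.cons h.sameHurwitzOrbit a, ih.2.cons h.sameHurwitzOrbit.symm a⟩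

theorem SameHurwitzOrbit.doublingsTransfer (h : SameHurwitzOrbit t t') :
    DoublingsTransfer t t' := by
  suffices DoublingsTransfer t t' ∧ DoublingsTransfer t' t from this.1
  induction h with
  | rel _ _ h => exact h.doublingsTransfer_and_symm
  | refl t => exact ⟨.refl t, .refl t⟩
  | symm _ _ _ ih => exact ih.symm
  | trans _ _ _ _ _ ih ih' => exact ⟨ih.1.trans ih'.1, ih'.2.trans ih.2⟩

theorem exists_sameHurwitzOrbit_cons {m : ℕ} (t : Fin (m + 1) → G) (p : Fin (m + 1))
    (hp : t p ^ 3 = 1) :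
    ∃ s : Fin m → G, SameHurwitzOrbit t (t p ∷ s) ∧
      SameHurwitzOrbit (doubleAt t p) (t p ^ 2 ∷ t p ^ 2 ∷ s) := by
  obtain ⟨a, t, rfl⟩ : ∃ a s, t = a ∷ s := ⟨_, _, (cons_head_tail t).symm⟩
  induction p using Fin.cases with
  | zero =>
    refine ⟨t, .refl _, ?_⟩
    rw [doubleAt_cons_zero]
    exact .refl _
  | succ p =>
    cases m with
    | zero => exact p.elim0
    | succ m =>
      rw [cons_val_succ] at hp ⊢
      obtain ⟨s, hpull, hdouble⟩ := exists_sameHurwitzOrbit_cons t p hp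
      have hswap : a * t p = t p * ((t p)⁻¹ * a * t p) := by group
      refine ⟨((t p)⁻¹ * a * t p) ∷ s, (hpull.cons a).trans (sameHurwitzOrbit_swap hswap s), ?_⟩
      rw [doubleAt_cons_succ]
      exact (hdouble.cons a).trans (sameHurwitzOrbit_sq_sq_right hswap hp s)

theorem BraidRel.mul_conj_eq_conj_mul_inv_conj (h : BraidRel x y) (hx : x ^ 3 = 1) :
    x * (x * y * x⁻¹) = x * y * x⁻¹ * (x⁻¹ * y * x) := by
  calc x * (x * y * x⁻¹) = x * (x * y * x) * x := by
        rw [← mul_self_eq_inv_of_pow_three_eq_one hx]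
        simp only [mul_assoc]
    _ = x * (y * x * y) * x := by rw [h]
    _ = x * y * x * (y * x) := by simp only [mul_assoc]
    _ = x * y * (x⁻¹ * x⁻¹) * (y * x) := by rw [inv_mul_inv_of_pow_three_eq_one hx]
    _ = x * y * x⁻¹ * (x⁻¹ * y * x) := by group

theorem BraidRel.sameHurwitzOrbit_sq_sq (h : BraidRel x y) (hx : x ^ 3 = 1) (t : Fin m → G) :
    SameHurwitzOrbit (x ^ 2 ∷ x ^ 2 ∷ y ∷ t) (x ∷ y ^ 2 ∷ y ^ 2 ∷ t) := by
  rw [sq_eq_inv_of_pow_three_eq_one hx, sq_eq_inv_of_pow_three_eq_one (h.pow_eq_one hx)]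
  obtain ⟨z, hz⟩ : ∃ z, z = x * y * x⁻¹ := ⟨_, rfl⟩
  obtain ⟨w, hw⟩ : ∃ w, w = x⁻¹ * y * x := ⟨_, rfl⟩
  have hzx : z * x = x * y := by rw [hz, inv_mul_cancel_right]
  have hyz : y * z = x * y := by rw [hz, h.conj_eq_inv_conj]; group
  have hxz : x * z = z * w := by rw [hz, hw, h.mul_conj_eq_conj_mul_inv_conj hx]
  have swap_x_y : x⁻¹ * y = y * z⁻¹ := by
    rw [eq_mul_inv_iff_mul_eq, mul_assoc, inv_mul_eq_iff_eq_mul, hyz]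
  have swap_w_x : w * x⁻¹ = x⁻¹ * y := by rw [hw, mul_inv_cancel_right]
  have swap_x_z : x⁻¹ * z⁻¹ = z⁻¹ * y⁻¹ := by
    rw [← _root_.mul_inv_rev, ← _root_.mul_inv_rev, hzx, hyz]
  have swap_w_z : w * z⁻¹ = z⁻¹ * x := by
    rw [mul_inv_eq_iff_eq_mul, mul_assoc, hxz, inv_mul_cancel_left]
  have swap_z_x : z⁻¹ * x = x * y⁻¹ := by
    rw [inv_mul_eq_iff_eq_mul, ← mul_assoc, hzx, mul_inv_cancel_right]
  calc SameHurwitzOrbit (x⁻¹ ∷ x⁻¹ ∷ y ∷ t) (x⁻¹ ∷ y ∷ z⁻¹ ∷ t) :=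
        (sameHurwitzOrbit_swap swap_x_y t).cons _
    SameHurwitzOrbit _ (w ∷ x⁻¹ ∷ z⁻¹ ∷ t) := (sameHurwitzOrbit_swap swap_w_x _).symm
    SameHurwitzOrbit _ (w ∷ z⁻¹ ∷ y⁻¹ ∷ t) := (sameHurwitzOrbit_swap swap_x_z t).cons _
    SameHurwitzOrbit _ (z⁻¹ ∷ x ∷ y⁻¹ ∷ t) := sameHurwitzOrbit_swap swap_w_z _
    SameHurwitzOrbit _ (x ∷ y⁻¹ ∷ y⁻¹ ∷ t) := sameHurwitzOrbit_swap swap_z_x _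

theorem sameHurwitzOrbit_sq_sq_doubleAt (hx : x ^ 3 = 1) (p : Fin m) (h : BraidRel x (t p)) :
    SameHurwitzOrbit (x ^ 2 ∷ x ^ 2 ∷ t) (x ∷ doubleAt t p) := by
  cases m with
  | zero => exact p.elim0
  | succ m =>
    obtain ⟨s, hpull, hdouble⟩ := exists_sameHurwitzOrbit_cons t p (h.pow_eq_one hx)
    calc SameHurwitzOrbit (x ^ 2 ∷ x ^ 2 ∷ t) (x ^ 2 ∷ x ^ 2 ∷ t p ∷ s) := (hpull.cons _).cons _
      SameHurwitzOrbit _ (x ∷ t p ^ 2 ∷ t p ^ 2 ∷ s) := h.sameHurwitzOrbit_sq_sq hx s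
      SameHurwitzOrbit _ (x ∷ doubleAt t p) := hdouble.symm.cons x

theorem sameHurwitzOrbit_doubleAt_doubleAt (t : Fin m → G) (p q : Fin m) (hp : t p ^ 3 = 1)
    (h : BraidRel (t p) (t q)) : SameHurwitzOrbit (doubleAt t p) (doubleAt t q) := by
  induction m with
  | zero => exact p.elim0
  | succ m ih =>
    obtain ⟨a, t, rfl⟩ : ∃ a s, t = a ∷ s := ⟨_, _, (cons_head_tail t).symm⟩
    cases p using Fin.cases <;> cases q using Fin.cases <;>
      simp only [doubleAt_cons_zero, doubleAt_cons_succ]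
    case zero.zero => exact .refl _
    case zero.succ q => exact sameHurwitzOrbit_sq_sq_doubleAt hp q h
    case succ.zero p => exact (sameHurwitzOrbit_sq_sq_doubleAt (h.pow_eq_one hp) p h.symm).symm
    case succ.succ p q => exact (ih t p q hp h).cons a

theorem doubling_preserves_orbit_general (h : SameHurwitzOrbit t t') {p q : Fin m}
    (hcube : t p ^ 3 = 1) (hbraid : BraidsWithConjugates (t p)) (hpq : IsConj (t p) (t' q)) :
    SameHurwitzOrbit (doubleAt t p) (doubleAt t' q) := by
  obtain ⟨r, hpr, hdouble⟩ := h.doublingsTransfer p hcube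
  have hrq : BraidRel (t' r) (t' q) := hbraid.of_isConj hpr _ (hpr.symm.trans hpq)
  exact hdouble.trans
    (sameHurwitzOrbit_doubleAt_doubleAt t' r q (pow_eq_one_of_isConj hpr hcube) hrq)

end Tuple

section G4

theorem omega_sq_add_omega_add_one : ω ^ 2 + ω + 1 = 0 := by
  have hprim : IsPrimitiveRoot ω 3 := by
    simpa [ω] using Complex.isPrimitiveRoot_exp 3 (by norm_num)
  have hsum := hprim.geom_sum_eq_zero (by norm_num)
  rw [Finset.sum_range_succ, Finset.sum_range_succ, Finset.sum_range_one] at hsum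
  linear_combination hsum

theorem omega_pow_three : ω ^ 3 = 1 := by
  linear_combination (ω - 1) * omega_sq_add_omega_add_one

theorem omega_ne_zero : ω ≠ 0 := Complex.exp_ne_zero _

theorem omega_pow_ne_neg_one (k : ℕ) : ω ^ k ≠ -1 := fun h => by
  have hcube : (ω ^ k) ^ 3 = 1 := by rw [pow_right_comm, omega_pow_three, one_pow]
  norm_num [h] at hcube

theorem det_AMat : AMat.det = ω := by simp [AMat, det_fin_two]

theorem det_BMat : BMat.det = ω := by
  have hω := omega_sq_add_omega_add_one
  rw [BMat, det_fin_two_of]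
  grind

theorem AMat_pow (k : ℕ) : AMat ^ k = diagonal ![1, ω ^ k] := by
  have hdiag : AMat = diagonal ![1, ω] := by
    ext i j; fin_cases i <;> fin_cases j <;> simp [AMat]
  rw [hdiag, diagonal_pow]
  congr 1
  ext i
  fin_cases i <;> simp

theorem AMat_pow_three : AMat ^ 3 = 1 := by
  rw [AMat_pow, omega_pow_three]
  ext i j; fin_cases i <;> fin_cases j <;> simp

theorem AMat_mul_BMat_mul_AMat : AMat * BMat * AMat = BMat * AMat * BMat := by
  have hω := omega_sq_add_omega_add_one
  ext i j
  fin_cases i <;> fin_cases j <;> simp [AMat, BMat, mul_apply] <;> grind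

theorem AMat_mul_BMat_mul_AMat_sq : (AMat * BMat * AMat) ^ 2 = -1 := by
  have hω := omega_sq_add_omega_add_one
  ext i j
  fin_cases i <;> fin_cases j <;> simp [AMat, BMat, mul_apply, pow_two] <;> grind

theorem trace_BMat_mul_AMat_sq : (BMat * AMat ^ 2).trace = 0 := by
  have hω := omega_sq_add_omega_add_one
  simp [AMat, BMat, trace_fin_two, pow_two]
  grind

theorem det_BMat_mul_AMat_sq : (BMat * AMat ^ 2).det = 1 := by
  rw [det_mul, det_pow, det_AMat, det_BMat, ← pow_succ', omega_pow_three]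

theorem det_sub_one_fin_two {R : Type*} [CommRing R] (M : Matrix (Fin 2) (Fin 2) R) :
    (M - 1).det = M.det - M.trace + 1 := by
  simp only [det_fin_two, trace_fin_two, Matrix.sub_apply, one_apply_eq,
    one_apply_ne zero_ne_one, one_apply_ne one_ne_zero]
  ring

theorem mat_mul (x y : G4) : mat (x * y) = mat x * mat y := rfl

theorem mat_pow (x : G4) (n : ℕ) : mat (x ^ n) = mat x ^ n := rfl

theorem mat_injective : Function.Injective mat := fun _ _ h => Subtype.ext (Units.ext h)

/-- The generating reflection of `G₄` with matrix `AMat`. -/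
def genA : G4 :=
  ⟨GeneralLinearGroup.mkOfDetNeZero AMat (det_AMat ▸ omega_ne_zero),
    Subgroup.subset_closure (.inl rfl)⟩

/-- The generating reflection of `G₄` with matrix `BMat`. -/
def genB : G4 :=
  ⟨GeneralLinearGroup.mkOfDetNeZero BMat (det_BMat ▸ omega_ne_zero),
    Subgroup.subset_closure (.inr rfl)⟩

theorem mat_genA : mat genA = AMat := rfl

theorem mat_genB : mat genB = BMat := rfl

theorem closure_genA_genB : Subgroup.closure {genA, genB} = ⊤ := by
  refine Eq.trans ?_ (Subgroup.closure_closure_coe_preimage (k := {g : GL (Fin 2) ℂ |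
    (g : Matrix (Fin 2) (Fin 2) ℂ) = AMat ∨ (g : Matrix (Fin 2) (Fin 2) ℂ) = BMat}))
  congr 1
  ext x
  exact or_congr (mat_injective.eq_iff (b := genA)).symm (mat_injective.eq_iff (b := genB)).symm

theorem genA_pow_three : genA ^ 3 = 1 := mat_injective AMat_pow_three

theorem braidRel_genA_genB : BraidRel genA genB := mat_injective AMat_mul_BMat_mul_AMat

theorem mat_fullTwist_genA_genB : mat (fullTwist genA genB) = -1 := AMat_mul_BMat_mul_AMat_sq

theorem IsReflection.of_isConj {x y : G4} (hx : IsReflection x) (h : IsConj x y) :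
    IsReflection y := by
  obtain ⟨g, rfl⟩ := isConj_iff.1 h
  refine ⟨fun hone => hx.1 (conj_eq_one_iff.1 hone), ?_⟩
  have hmat : mat (g * x * g⁻¹) - 1 = mat g * (mat x - 1) * mat g⁻¹ := by
    rw [mul_sub, sub_mul, mul_one, ← mat_mul, ← mat_mul, ← mat_mul, mul_inv_cancel]
    rfl
  rw [hmat, det_mul, det_mul, hx.2, mul_zero, zero_mul]

theorem not_isReflection_fullTwist_pow_mul_mul_sq (n : ℕ) :
    ¬ IsReflection (fullTwist genA genB ^ n * (genB * genA ^ 2)) := fun h => by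
  have hdet := h.2
  rw [mat_mul, mat_pow, mat_fullTwist_genA_genB, mat_mul, mat_pow, mat_genA, mat_genB,
    det_sub_one_fin_two, det_mul, det_pow, det_BMat_mul_AMat_sq] at hdet
  rcases neg_one_pow_eq_or (Matrix (Fin 2) (Fin 2) ℂ) n with hn | hn <;>
    norm_num [hn, det_neg, trace_BMat_mul_AMat_sq] at hdet

theorem IsReflection.fullTwist_pow_mul_genA_pow {n k : ℕ}
    (h : IsReflection (fullTwist genA genB ^ n * genA ^ k)) :
    fullTwist genA genB ^ n * genA ^ k = genA ∨ fullTwist genA genB ^ n * genA ^ k = genA⁻¹ := by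
  have hmat : mat (fullTwist genA genB ^ n) = (-1) ^ n := by
    rw [mat_pow, mat_fullTwist_genA_genB]
  rcases neg_one_pow_eq_or (Matrix (Fin 2) (Fin 2) ℂ) n with hn | hn
  · have hone : fullTwist genA genB ^ n = 1 := mat_injective (hmat.trans hn)
    rw [hone, one_mul, pow_eq_pow_mod k genA_pow_three] at h ⊢
    have hk : k % 3 < 3 := Nat.mod_lt _ (by norm_num)
    interval_cases k % 3
    · exact (h.1 (pow_zero _)).elim
    · exact .inl (pow_one _)
    · exact .inr (sq_eq_inv_of_pow_three_eq_one genA_pow_three)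
  · have hdet : (-AMat ^ k - 1).det = 2 * (ω ^ k + 1) := by
      rw [AMat_pow, det_sub_one_fin_two]
      simp
      ring
    have hzero : 2 * (ω ^ k + 1) = 0 := by
      rw [← hdet, ← h.2, mat_mul, hmat, hn, neg_one_mul, mat_pow, mat_genA]
    exact (omega_pow_ne_neg_one k (by linear_combination hzero / 2)).elim

theorem IsReflection.isConj_genA {x : G4} (hx : IsReflection x) :
    IsConj genA x ∨ IsConj genA⁻¹ x := by
  obtain ⟨n, ⟨k, hk⟩ | hmul⟩ :=
    braidRel_genA_genB.exists_isConj_fullTwist_pow_mul genA_pow_three closure_genA_genB x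
  · rcases (hx.of_isConj hk.symm).fullTwist_pow_mul_genA_pow with heq | heq
    · exact .inl (heq ▸ hk)
    · exact .inr (heq ▸ hk)
  · exact (not_isReflection_fullTwist_pow_mul_mul_sq n (hx.of_isConj hmul.symm)).elim

theorem IsReflection.pow_three_eq_one {x : G4} (hx : IsReflection x) : x ^ 3 = 1 := by
  rcases hx.isConj_genA with h | h
  · exact pow_eq_one_of_isConj h genA_pow_three
  · exact pow_eq_one_of_isConj h (by rw [inv_pow, genA_pow_three, inv_one])

theorem IsReflection.braidsWithConjugates {x : G4} (hx : IsReflection x) :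
    BraidsWithConjugates x := by
  have hA : BraidsWithConjugates genA :=
    braidRel_genA_genB.braidsWithConjugates genA_pow_three closure_genA_genB
  exact hx.isConj_genA.elim hA.of_isConj hA.inv.of_isConj

end G4

section G5

theorem ga_pow_three : ga ^ 3 = 1 :=
  PresentedGroup.one_of_mem (rels := g5Rels) (x := FreeGroup.of 0 ^ 3) (.inl rfl)

theorem gb_pow_three : gb ^ 3 = 1 :=
  PresentedGroup.one_of_mem (rels := g5Rels) (x := FreeGroup.of 1 ^ 3) (.inr (.inl rfl))

theorem ga_mul_gb_mul_ga_mul_gb : ga * gb * ga * gb = gb * ga * gb * ga :=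
  mul_inv_eq_one.1 (PresentedGroup.one_of_mem (rels := g5Rels)
    (x := FreeGroup.of 0 * FreeGroup.of 1 * FreeGroup.of 0 * FreeGroup.of 1 *
      (FreeGroup.of 1 * FreeGroup.of 0 * FreeGroup.of 1 * FreeGroup.of 0)⁻¹) (.inr (.inr rfl)))

theorem closure_ga_gb : Subgroup.closure {ga, gb} = ⊤ := by
  rw [← PresentedGroup.closure_range_of g5Rels]
  congr 1
  ext x
  simp [ga, gb, Fin.exists_fin_two, eq_comm]

theorem braidsWithConjugates_ga : BraidsWithConjugates ga :=
  braidsWithConjugates_of_mul_mul_mul_eq ga_pow_three gb_pow_three ga_mul_gb_mul_ga_mul_gb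
    closure_ga_gb

theorem braidsWithConjugates_gb : BraidsWithConjugates gb :=
  braidsWithConjugates_of_mul_mul_mul_eq gb_pow_three ga_pow_three ga_mul_gb_mul_ga_mul_gb.symm
    (Set.pair_comm ga gb ▸ closure_ga_gb)

theorem IsReflection5.pow_three_eq_one {x : G5} (hx : IsReflection5 x) : x ^ 3 = 1 := by
  rcases hx with h | h | h | h
  · exact pow_eq_one_of_isConj h ga_pow_three
  · exact pow_eq_one_of_isConj h gb_pow_three
  · exact pow_eq_one_of_isConj h (by rw [pow_right_comm, ga_pow_three, one_pow])
  · exact pow_eq_one_of_isConj h (by rw [pow_right_comm, gb_pow_three, one_pow])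

theorem IsReflection5.braidsWithConjugates {x : G5} (hx : IsReflection5 x) :
    BraidsWithConjugates x := by
  rcases hx with h | h | h | h
  · exact braidsWithConjugates_ga.of_isConj h
  · exact braidsWithConjugates_gb.of_isConj h
  · exact braidsWithConjugates_ga.inv.of_isConj (sq_eq_inv_of_pow_three_eq_one ga_pow_three ▸ h)
  · exact braidsWithConjugates_gb.inv.of_isConj (sq_eq_inv_of_pow_three_eq_one gb_pow_three ▸ h)

end G5

theorem doubling_preserves_orbit :
    (∀ (m : ℕ) (t t' : Fin m → G4), (∀ i, IsReflection (t i)) →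
      (∀ i, IsReflection (t' i)) → SameHurwitzOrbit t t' →
      ∀ p q : Fin m, IsConj (t p) (t' q) →
        SameHurwitzOrbit (doubleAt t p) (doubleAt t' q)) ∧
    (∀ (m : ℕ) (t t' : Fin m → G5), (∀ i, IsReflection5 (t i)) →
      (∀ i, IsReflection5 (t' i)) → SameHurwitzOrbit t t' →
      ∀ p q : Fin m, IsConj (t p) (t' q) →
        SameHurwitzOrbit (doubleAt t p) (doubleAt t' q)) := by
  constructor <;> intro m t t' ht _ h p q hpq
  · exact doubling_preserves_orbit_general h (ht p).pow_three_eq_one (ht p).braidsWithConjugates hpq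
  · exact doubling_preserves_orbit_general h (ht p).pow_three_eq_one (ht p).braidsWithConjugates hpq
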